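/- Let f : ℝ → ℝ be differentiable on an open interval I containing [0,∞), let 0 ≤ a < b, suppose f' is integrable on [a,b], let p > 1 and q = p/(p-1), and suppose |f'|^q is convex on [a,b]. Let a = x₀ < x₁ < ... < x_{n-1} < x_n = b be a division of [a,b] and let M(f,d) = Σ_{i=0}^{n-1} (x_{i+1} - x_i)·f((x_i + x_{i+1})/2) be the composite midpoint rule. Then |∫_a^b f(x) dx - M(f,d)| ≤ (1/4)·Σ_{i=0}^{n-1} (x_{i+1} - x_i)²·( μ₁ᵢ^{1/q} + μ₂ᵢ^{1/q} ), where μ₁ᵢ = ( |f'((x_i+x_{i+1})/2)|^q + |f'(x_i)|^q )/2 and μ₂ᵢ = ( |f'((x_i+x_{i+1})/2)|^q + |f'(x_{i+1})|^q )/2. -/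

import Mathlib

open MeasureTheory Set intervalIntegral

lemma aux_pt (q : ℝ) (hq : 1 ≤ q) (A y g : ℝ) (hA : 0 < A) (hy : 0 ≤ y) (hg : y ^ q ≤ g) :
    y ≤ A * (1 + (g / A ^ q - 1) / q) := by
  have hq0 : 0 < q := by linarith
  have h1 := one_add_mul_self_le_rpow_one_add (s := y / A - 1)
    (by have : 0 ≤ y / A := by positivity
        linarith) hq
  have e : 1 + (y / A - 1) = y / A := by ring
  rw [e, Real.div_rpow hy hA.le] at h1
  have hAq : 0 < A ^ q := Real.rpow_pos_of_pos hA q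
  have h2 : y ^ q / A ^ q ≤ g / A ^ q := by gcongr
  have h3 : y / A - 1 ≤ (g / A ^ q - 1) / q := by
    rw [le_div_iff₀ hq0]; linarith
  have h4 : y / A ≤ 1 + (g / A ^ q - 1) / q := by linarith
  rw [div_le_iff₀ hA] at h4
  linarith

lemma aux_int (k0 k1 c d : ℝ) :
    (∫ t in c..d, (k0 + k1 * (t - c))) = (d - c) * (k0 + k1 * (d - c) / 2) := by
  have : ∀ t ∈ uIcc c d, HasDerivAt (fun t => k0 * t + k1 * (t - c) ^ 2 / 2)
      (k0 + k1 * (t - c)) t := by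
    intro t _
    have h1 := (hasDerivAt_id t).const_mul k0
    have h2 := ((((hasDerivAt_id t).sub_const c).pow 2).const_mul k1).div_const 2
    refine (h1.add h2).congr_deriv ?_
    norm_num
    ring
  rw [integral_eq_sub_of_hasDerivAt this (Continuous.intervalIntegrable (by fun_prop) _ _)]
  ring

lemma aux_diff (f : ℝ → ℝ) (c d q : ℝ) (hcd : c < d) (hq : 1 ≤ q)
    (hf : ∀ y ∈ Icc c d, DifferentiableAt ℝ f y)
    (hint : IntervalIntegrable (deriv f) volume c d)
    (hconv : ConvexOn ℝ (Icc c d) (fun u => |deriv f u| ^ q))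
    (u v : ℝ) (hu : c ≤ u) (huv : u ≤ v) (hv : v ≤ d) :
    |f v - f u| ≤ (d - c) * ((|deriv f c| ^ q + |deriv f d| ^ q) / 2) ^ (1 / q) := by
  have hq0 : 0 < q := by linarith
  have hh : 0 < d - c := by linarith
  set gc := |deriv f c| ^ q with hgc
  set gd := |deriv f d| ^ q with hgd
  have gc0 : 0 ≤ gc := by positivity
  have gd0 : 0 ≤ gd := by positivity
  set μ := (gc + gd) / 2 with hμ
  have hμ0 : 0 ≤ μ := by positivity
  have main : ∀ A : ℝ, 0 < A → μ ≤ A ^ q → (∫ t in c..d, |deriv f t|) ≤ (d - c) * A := by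
    intro A hA hAμ
    have hAq : 0 < A ^ q := Real.rpow_pos_of_pos hA q
    have hpt : ∀ t ∈ Icc c d, |deriv f t| ≤
        A * (1 + (gc / A ^ q - 1) / q) + (A * ((gd - gc) / (d - c) / A ^ q / q)) * (t - c) := by
      intro t ht
      have hc := hconv.2 (left_mem_Icc.2 hcd.le) (right_mem_Icc.2 hcd.le)
        (show 0 ≤ (d - t) / (d - c) from div_nonneg (by linarith [ht.2]) hh.le)
        (show 0 ≤ (t - c) / (d - c) from div_nonneg (by linarith [ht.1]) hh.le)
        (by field_simp; ring)
      have e : ((d - t) / (d - c)) • c + ((t - c) / (d - c)) • d = t := by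
        simp only [smul_eq_mul]; field_simp; ring
      rw [e] at hc
      have := aux_pt q hq A _ _ hA (abs_nonneg _) hc
      refine this.trans (le_of_eq ?_)
      simp only [smul_eq_mul, ← hgc, ← hgd]
      field_simp
      ring
    have h1 : (∫ t in c..d, |deriv f t|) ≤ _ :=
      intervalIntegral.integral_mono_on hcd.le hint.abs
        (Continuous.intervalIntegrable (by fun_prop) _ _) hpt
    rw [aux_int] at h1
    refine h1.trans (mul_le_mul_of_nonneg_left ?_ hh.le)
    have e2 : A * (1 + (gc / A ^ q - 1) / q) +
        (A * ((gd - gc) / (d - c) / A ^ q / q)) * (d - c) / 2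
        = A * (1 + (μ / A ^ q - 1) / q) := by
      rw [hμ]; field_simp; ring
    rw [e2]
    have h3 : μ / A ^ q ≤ 1 := by rw [div_le_one hAq]; exact hAμ
    have h4 : (μ / A ^ q - 1) / q ≤ 0 := div_nonpos_of_nonpos_of_nonneg (by linarith) hq0.le
    nlinarith
  have hA : (∫ t in c..d, |deriv f t|) ≤ (d - c) * μ ^ (1 / q) := by
    refine le_of_forall_pos_le_add fun ε hε => ?_
    have hp : 0 ≤ μ ^ (1 / q) := by positivity
    have := main (μ ^ (1 / q) + ε / (d - c)) (by positivity) (by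
      calc μ = (μ ^ (1 / q)) ^ q := by
            rw [← Real.rpow_mul hμ0, one_div, inv_mul_cancel₀ hq0.ne', Real.rpow_one]
        _ ≤ _ := by
          have : 0 ≤ ε / (d - c) := by positivity
          exact Real.rpow_le_rpow hp (by linarith) hq0.le)
    refine this.trans (le_of_eq ?_)
    field_simp
  refine le_trans ?_ hA
  have hsub : uIcc u v ⊆ uIcc c d := by
    rw [uIcc_of_le huv, uIcc_of_le hcd.le]; exact Icc_subset_Icc hu hv
  have hint' := hint.mono_set hsub
  rw [← integral_eq_sub_of_hasDerivAt (f := f) (f' := deriv f) (fun t ht => (hf t (by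
    have := hsub ht
    rwa [uIcc_of_le hcd.le] at this)).hasDerivAt) hint']
  refine (intervalIntegral.abs_integral_le_integral_abs huv).trans ?_
  exact intervalIntegral.integral_mono_interval hu huv hv
    (Filter.Eventually.of_forall fun t => abs_nonneg _) hint.abs

lemma aux_half (f : ℝ → ℝ) (c d q : ℝ) (hcd : c < d) (hq : 1 ≤ q)
    (hf : ∀ y ∈ Icc c d, DifferentiableAt ℝ f y)
    (hint : IntervalIntegrable (deriv f) volume c d)
    (hconv : ConvexOn ℝ (Icc c d) (fun u => |deriv f u| ^ q))
    (w : ℝ) (hw : w ∈ Icc c d) :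
    |(∫ t in c..d, f t) - (d - c) * f w| ≤
      (d - c) ^ 2 * ((|deriv f c| ^ q + |deriv f d| ^ q) / 2) ^ (1 / q) := by
  have hfi : IntervalIntegrable f volume c d := by
    apply ContinuousOn.intervalIntegrable
    rw [uIcc_of_le hcd.le]
    exact fun y hy => (hf y hy).continuousAt.continuousWithinAt
  have e : (∫ t in c..d, f t) - (d - c) * f w = ∫ t in c..d, (f t - f w) := by
    rw [intervalIntegral.integral_sub hfi (by simp)]; simp
  rw [e]
  have := intervalIntegral.norm_integral_le_of_norm_le_const (a := c) (b := d)
    (f := fun t => f t - f w)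
    (C := (d - c) * ((|deriv f c| ^ q + |deriv f d| ^ q) / 2) ^ (1 / q)) (by
      intro t ht
      rw [uIoc_of_le hcd.le] at ht
      rw [Real.norm_eq_abs]
      rcases le_total t w with h | h
      · rw [abs_sub_comm]
        exact aux_diff f c d q hcd hq hf hint hconv t w ht.1.le h hw.2
      · exact aux_diff f c d q hcd hq hf hint hconv w t hw.1 h ht.2)
  rw [Real.norm_eq_abs, abs_of_pos (sub_pos.2 hcd)] at this
  refine this.trans (le_of_eq (by ring))

lemma aux_cell (f : ℝ → ℝ) (c d q : ℝ) (hcd : c < d) (hq : 1 ≤ q)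
    (hf : ∀ y ∈ Icc c d, DifferentiableAt ℝ f y)
    (hint : IntervalIntegrable (deriv f) volume c d)
    (hconv : ConvexOn ℝ (Icc c d) (fun u => |deriv f u| ^ q)) :
    |(∫ t in c..d, f t) - (d - c) * f ((c + d) / 2)| ≤
      (1 / 4) * ((d - c) ^ 2 *
        (((|deriv f ((c + d) / 2)| ^ q + |deriv f c| ^ q) / 2) ^ (1 / q)
          + ((|deriv f ((c + d) / 2)| ^ q + |deriv f d| ^ q) / 2) ^ (1 / q))) := by
  have hfi : IntervalIntegrable f volume c d := by
    apply ContinuousOn.intervalIntegrable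
    rw [uIcc_of_le hcd.le]
    exact fun y hy => (hf y hy).continuousAt.continuousWithinAt
  obtain ⟨m, hm⟩ : ∃ m, m = (c + d) / 2 := ⟨_, rfl⟩
  rw [← hm]
  have hcm : c < m := by linarith
  have hmd : m < d := by linarith
  have s1 : Icc c m ⊆ Icc c d := Icc_subset_Icc le_rfl hmd.le
  have s2 : Icc m d ⊆ Icc c d := Icc_subset_Icc hcm.le le_rfl
  have u1 : uIcc c m ⊆ uIcc c d := by rwa [uIcc_of_le hcm.le, uIcc_of_le hcd.le]
  have u2 : uIcc m d ⊆ uIcc c d := by rwa [uIcc_of_le hmd.le, uIcc_of_le hcd.le]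
  have h1 := aux_half f c m q hcm hq (fun y hy => hf y (s1 hy)) (hint.mono_set u1)
    (hconv.subset s1 (convex_Icc _ _)) m (right_mem_Icc.2 hcm.le)
  have h2 := aux_half f m d q hmd hq (fun y hy => hf y (s2 hy)) (hint.mono_set u2)
    (hconv.subset s2 (convex_Icc _ _)) m (left_mem_Icc.2 hmd.le)
  rw [← intervalIntegral.integral_add_adjacent_intervals (hfi.mono_set u1) (hfi.mono_set u2)]
  have e : (∫ t in c..m, f t) + (∫ t in m..d, f t) - (d - c) * f m =
    ((∫ t in c..m, f t) - (m - c) * f m) + ((∫ t in m..d, f t) - (d - m) * f m) := by ring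
  rw [e]
  refine (abs_add_le _ _).trans ((add_le_add h1 h2).trans (le_of_eq ?_))
  rw [add_comm (|deriv f c| ^ q)]
  have e1 : m - c = (d - c) / 2 := by rw [hm]; ring
  have e2 : d - m = (d - c) / 2 := by rw [hm]; ring
  rw [e1, e2]; ring

/-- Proposition 4.1: error estimate for the composite midpoint rule, `|f'|^q` convex
(`1`-convex) on `[a,b]`, `q = p/(p-1)`. -/
theorem stmt_15 (f : ℝ → ℝ) (I : Set ℝ) (hIopen : IsOpen I) (hIconn : I.OrdConnected)
    (hIci : Set.Ici (0:ℝ) ⊆ I) (hf : ∀ y ∈ I, DifferentiableAt ℝ f y)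
    (a b : ℝ) (ha : 0 ≤ a) (hab : a < b)
    (hint : IntervalIntegrable (deriv f) volume a b)
    (p q : ℝ) (hp : 1 < p) (hq : q = p / (p - 1))
    (hconv : ConvexOn ℝ (Set.Icc a b) (fun u => |deriv f u| ^ q))
    (n : ℕ) (hn : 0 < n) (x : ℕ → ℝ) (hx0 : x 0 = a) (hxn : x n = b)
    (hxmono : ∀ i < n, x i < x (i + 1)) :
    |(∫ u in a..b, f u) -
        ∑ i ∈ Finset.range n, (x (i + 1) - x i) * f ((x i + x (i + 1)) / 2)| ≤
      (1 / 4) * ∑ i ∈ Finset.range n, (x (i + 1) - x i) ^ 2 *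
        (((|deriv f ((x i + x (i + 1)) / 2)| ^ q + |deriv f (x i)| ^ q) / 2) ^ (1 / q)
          + ((|deriv f ((x i + x (i + 1)) / 2)| ^ q + |deriv f (x (i + 1))| ^ q) / 2)
              ^ (1 / q)) := by
  have hp1 : 0 < p - 1 := by linarith
  have hq1 : 1 ≤ q := by rw [hq, le_div_iff₀ hp1]; linarith
  have hmono : ∀ j, j ≤ n → ∀ i, i ≤ j → x i ≤ x j := by
    intro j
    induction j with
    | zero => intro _ i hi; rw [Nat.le_zero.1 hi]
    | succ k ih =>
      intro hk i hi
      rcases Nat.lt_or_ge i (k + 1) with h | h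
      · exact (ih (by omega) i (by omega)).trans (hxmono k (by omega)).le
      · rw [le_antisymm hi h]
  have hsub : ∀ i < n, Icc (x i) (x (i + 1)) ⊆ Icc a b := by
    intro i hi
    rw [← hx0, ← hxn]
    exact Icc_subset_Icc (hmono i hi.le 0 (Nat.zero_le _)) (hmono n le_rfl (i + 1) hi)
  have husub : ∀ i < n, uIcc (x i) (x (i + 1)) ⊆ uIcc a b := by
    intro i hi
    rw [uIcc_of_le (hxmono i hi).le, uIcc_of_le hab.le]
    exact hsub i hi
  have hfd : ∀ y ∈ Icc a b, DifferentiableAt ℝ f y :=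
    fun y hy => hf y (hIci (ha.trans hy.1))
  have hfi : IntervalIntegrable f volume a b := by
    apply ContinuousOn.intervalIntegrable
    rw [uIcc_of_le hab.le]
    exact fun y hy => (hfd y hy).continuousAt.continuousWithinAt
  have hs := intervalIntegral.sum_integral_adjacent_intervals (f := f) (μ := volume) (a := x)
    (n := n) (fun i hi => hfi.mono_set (husub i hi))
  rw [hx0, hxn] at hs
  rw [← hs, ← Finset.sum_sub_distrib, Finset.mul_sum]
  refine (Finset.abs_sum_le_sum_abs _ _).trans (Finset.sum_le_sum fun i hi => ?_)
  have hi' := Finset.mem_range.1 hi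
  exact aux_cell f (x i) (x (i + 1)) q (hxmono i hi') hq1 (fun y hy => hfd y (hsub i hi' hy))
    (hint.mono_set (husub i hi')) (hconv.subset (hsub i hi') (convex_Icc _ _))
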